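/- arXiv:2405.13371 — 2 statements merged into one kernel-verified Lean document; each statement's English description precedes it below -/
import Mathlib

section
/- For every finite simple graph G = (V, E) with maximum degree Δ ≥ 1, there exists a probability distribution (PMF) over matchings of G such that for every vertex v with deg(v) = Δ, the probability that v is not covered by the random matching drawn from this distribution is at most 1/Δ. -/
/-- A matching of a simple graph, as a finite set of edges of `G` that are
pairwise vertex-disjoint. -/
def IsMatchingSet {V : Type*} (G : SimpleGraph V) (M : Finset (Sym2 V)) : Prop :=
  (↑M ⊆ G.edgeSet) ∧
    ∀ e ∈ M, ∀ f ∈ M, e ≠ f → ∀ v : V, ¬(v ∈ e ∧ v ∈ f)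

/-- A proper edge colouring of `G` with colours in `K`. -/
def PC {V : Type*} (G : SimpleGraph V) (K : Finset ℕ) (c : Sym2 V → ℕ) : Prop :=
  (∀ x y, G.Adj x y → c s(x, y) ∈ K) ∧
    ∀ x y z, G.Adj x y → G.Adj x z → c s(x, y) = c s(x, z) → y = z

/-- In a graph of maximum degree two, a component has at most two vertices of degree one. -/
lemma comp_ends {V : Type*} [Fintype V] [DecidableEq V] (H : SimpleGraph V)
    [DecidableRel H.Adj] (hdeg : ∀ x, H.degree x ≤ 2) (C : H.ConnectedComponent)
    (A : Finset V) (hA : ∀ x ∈ A, x ∈ C.supp ∧ H.degree x ≤ 1) : A.card ≤ 2 := by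
  classical
  have h1 := C.connected_toSimpleGraph.card_vert_le_card_edgeSet_add_one
  have h2 := C.toSimpleGraph.sum_degrees_eq_twice_card_edges
  rw [Nat.card_eq_fintype_card, Nat.card_eq_fintype_card, ← SimpleGraph.edgeFinset_card] at h1
  have hle : ∀ x : C, C.toSimpleGraph.degree x ≤ H.degree x.1 := by
    intro x
    rw [← SimpleGraph.card_neighborFinset_eq_degree, ← SimpleGraph.card_neighborFinset_eq_degree]
    apply Finset.card_le_card_of_injOn Subtype.val
    · intro y hy
      simp at hy ⊢
      exact hy
    · exact Subtype.val_injective.injOn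
  have h3 : ∀ x : C, C.toSimpleGraph.degree x + (if x.1 ∈ A then 1 else 0) ≤ 2 := by
    intro x
    have := hle x
    split_ifs with h
    · have := (hA _ h).2
      omega
    · have := hdeg x.1
      omega
  have h4 := Finset.sum_le_sum (fun x (_ : x ∈ (Finset.univ : Finset C)) => h3 x)
  rw [Finset.sum_add_distrib, h2] at h4
  have h5 : A.card ≤ ∑ x : C, (if x.1 ∈ A then 1 else 0) := by
    rw [← Finset.card_filter]
    have : A ⊆ (Finset.univ.filter (fun x : C => x.1 ∈ A)).image Subtype.val := by
      intro x hx
      simp only [Finset.mem_image, Finset.mem_filter, Finset.mem_univ, true_and]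
      exact ⟨⟨x, (hA x hx).1⟩, hx, rfl⟩
    exact (Finset.card_le_card this).trans Finset.card_image_le
  simp only [Finset.sum_const, Finset.card_univ, smul_eq_mul] at h4
  omega

/-- Kempe swap: empties no colour class and fills an empty one. -/
lemma kempe {V : Type*} [Fintype V] [DecidableEq V] (G : SimpleGraph V)
    (K : Finset ℕ) (c : Sym2 V → ℕ) (hc : PC G K c) (N : Finset V) (S : V → Finset ℕ)
    (hSK : ∀ u ∈ N, S u ⊆ K) (hmiss : ∀ u ∈ N, ∀ y, G.Adj u y → c s(u, y) ∉ S u)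
    (i j : ℕ) (hi : i ∈ K) (hj : j ∈ K)
    (hXi : 3 ≤ (N.filter (fun u => i ∈ S u)).card)
    (hXj : ∀ u ∈ N, j ∉ S u) :
    ∃ (c' : Sym2 V → ℕ) (S' : V → Finset ℕ), PC G K c' ∧ (∀ u ∈ N, S' u ⊆ K) ∧
      (∀ u ∈ N, ∀ y, G.Adj u y → c' s(u, y) ∉ S' u) ∧ (∀ u, (S' u).card = (S u).card) ∧
      (K.filter (fun a => ∀ u ∈ N, a ∉ S' u)).card <
        (K.filter (fun a => ∀ u ∈ N, a ∉ S u)).card := by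
  classical
  have hij : i ≠ j := by
    rintro rfl
    rw [Finset.filter_false_of_mem hXj] at hXi
    simp at hXi
  let H : SimpleGraph V :=
    { Adj := fun x y => G.Adj x y ∧ (c s(x, y) = i ∨ c s(x, y) = j)
      symm := ⟨fun x y h => by rw [Sym2.eq_swap]; exact ⟨h.1.symm, h.2⟩⟩
      loopless := ⟨fun x h => G.loopless.irrefl x h.1⟩ }
  have hH : ∀ x y, H.Adj x y ↔ G.Adj x y ∧ (c s(x, y) = i ∨ c s(x, y) = j) :=
    fun x y => Iff.rfl
  have hinj : ∀ x, Set.InjOn (fun y => c s(x, y)) (H.neighborFinset x) := by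
    intro x y hy z hz h
    simp only [SimpleGraph.coe_neighborFinset, SimpleGraph.mem_neighborSet, hH] at hy hz
    exact hc.2 x y z hy.1 hz.1 h
  have hdeg : ∀ x, H.degree x ≤ 2 := by
    intro x
    rw [← SimpleGraph.card_neighborFinset_eq_degree]
    refine (Finset.card_le_card_of_injOn (t := {i, j}) _ ?_ (hinj x)).trans Finset.card_le_two
    intro y hy
    simp only [SimpleGraph.coe_neighborFinset, SimpleGraph.mem_neighborSet, hH] at hy
    simpa using hy.2
  have hdeg1 : ∀ x ∈ N, i ∈ S x → H.degree x ≤ 1 := by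
    intro x hx hix
    rw [← SimpleGraph.card_neighborFinset_eq_degree]
    refine (Finset.card_le_card_of_injOn (t := {j}) _ ?_ (hinj x)).trans (by simp)
    intro y hy
    simp only [SimpleGraph.coe_neighborFinset, SimpleGraph.mem_neighborSet, hH] at hy
    rcases hy.2 with h | h
    · exact absurd (h ▸ hix) (hmiss x hx y hy.1)
    · simpa using h
  obtain ⟨u, hu⟩ := Finset.card_pos.mp (by omega : 0 < (N.filter (fun u => i ∈ S u)).card)
  rw [Finset.mem_filter] at hu
  set C := H.connectedComponentMk u with hC
  have huC : u ∈ C.supp := rfl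
  have hclosed : ∀ x y, G.Adj x y → (c s(x, y) = i ∨ c s(x, y) = j) →
      (x ∈ C.supp ↔ y ∈ C.supp) := by
    intro x y h1 h2
    exact C.mem_supp_congr_adj ((hH x y).2 ⟨h1, h2⟩)
  obtain ⟨w, hwN, hiw, hwC⟩ : ∃ w ∈ N, i ∈ S w ∧ w ∉ C.supp := by
    by_contra! hcon
    have := comp_ends H hdeg C (N.filter (fun u => i ∈ S u)) (by
      intro x hx
      rw [Finset.mem_filter] at hx
      exact ⟨hcon x hx.1 hx.2, hdeg1 x hx.1 hx.2⟩)
    omega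
  have hswapK : ∀ a, a ∈ K → Equiv.swap i j a ∈ K := by
    intro a ha
    rw [Equiv.swap_apply_def]
    split_ifs <;> assumption
  let c' : Sym2 V → ℕ := fun e => if ∃ x ∈ e, x ∈ C.supp then Equiv.swap i j (c e) else c e
  have hc' : ∀ x y, G.Adj x y →
      c' s(x, y) = if x ∈ C.supp then Equiv.swap i j (c s(x, y)) else c s(x, y) := by
    intro x y hxy
    by_cases hx : x ∈ C.supp
    · rw [if_pos hx]
      exact if_pos ⟨x, by simp, hx⟩
    · rw [if_neg hx]
      by_cases hy : y ∈ C.supp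
      · have : c' s(x, y) = Equiv.swap i j (c s(x, y)) := if_pos ⟨y, by simp, hy⟩
        rw [this]
        have hn : ¬ (c s(x, y) = i ∨ c s(x, y) = j) :=
          fun h => hx ((hclosed x y hxy h).2 hy)
        push Not at hn
        exact Equiv.swap_apply_of_ne_of_ne hn.1 hn.2
      · refine if_neg ?_
        rintro ⟨z, hz, hzC⟩
        rcases Sym2.mem_iff.1 hz with rfl | rfl
        · exact hx hzC
        · exact hy hzC
  let S' : V → Finset ℕ := fun x => if x ∈ C.supp then (S x).map (Equiv.swap i j).toEmbedding else S x
  have hS'1 : ∀ x ∈ C.supp, ∀ a, a ∈ S' x ↔ Equiv.swap i j a ∈ S x := by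
    intro x hx a
    simp only [S', if_pos hx, Finset.mem_map_equiv, Equiv.symm_swap]
  have hS'2 : ∀ x, x ∉ C.supp → S' x = S x := fun x hx => if_neg hx
  refine ⟨c', S', ⟨?_, ?_⟩, ?_, ?_, ?_, ?_⟩
  · intro x y h
    rw [hc' x y h]
    split_ifs
    · exact hswapK _ (hc.1 x y h)
    · exact hc.1 x y h
  · intro x y z h1 h2 h
    rw [hc' x y h1, hc' x z h2] at h
    split_ifs at h
    · exact hc.2 x y z h1 h2 ((Equiv.swap i j).injective h)
    · exact hc.2 x y z h1 h2 h
  · intro x hx a ha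
    by_cases hxC : x ∈ C.supp
    · have := hswapK _ (hSK x hx ((hS'1 x hxC a).1 ha))
      simpa using this
    · rw [hS'2 x hxC] at ha
      exact hSK x hx ha
  · intro x hx y hxy
    rw [hc' x y hxy]
    by_cases hxC : x ∈ C.supp
    · rw [if_pos hxC, hS'1 x hxC, Equiv.swap_apply_self]
      exact hmiss x hx y hxy
    · rw [if_neg hxC, hS'2 x hxC]
      exact hmiss x hx y hxy
  · intro x
    by_cases hxC : x ∈ C.supp
    · simp only [S', if_pos hxC, Finset.card_map]
    · rw [hS'2 x hxC]
  · apply Finset.card_lt_card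
    rw [Finset.ssubset_iff_of_subset]
    · refine ⟨j, Finset.mem_filter.2 ⟨hj, hXj⟩, ?_⟩
      intro h
      refine (Finset.mem_filter.1 h).2 u hu.1 ?_
      rw [hS'1 u huC, Equiv.swap_apply_right]
      exact hu.2
    · intro a ha
      rw [Finset.mem_filter] at ha ⊢
      refine ⟨ha.1, fun x hx hax => ?_⟩
      by_cases hai : a = i
      · subst hai
        refine ha.2 w hwN ?_
        rw [hS'2 w hwC]
        exact hiw
      · have haj : a ≠ j := fun h => hXj x hx (h ▸ hax)
        refine ha.2 x hx ?_
        by_cases hxC : x ∈ C.supp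
        · rw [hS'1 x hxC, Equiv.swap_apply_of_ne_of_ne hai haj]
          exact hax
        · rw [hS'2 x hxC]
          exact hax

/-- One can recolour so that some colour is available at exactly one vertex of `N`. -/
lemma exists_singleton {V : Type*} [Fintype V] [DecidableEq V] (G : SimpleGraph V)
    (K : Finset ℕ) (N : Finset V) (hN : N.card ≤ K.card) (u₀ : V) (hu₀ : u₀ ∈ N) :
    ∀ (n : ℕ) (c : Sym2 V → ℕ) (S : V → Finset ℕ), PC G K c → (∀ u ∈ N, S u ⊆ K) →
    (∀ u ∈ N, ∀ y, G.Adj u y → c s(u, y) ∉ S u) →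
    (∀ u ∈ N, (S u).card = if u = u₀ then 1 else 2) →
    (K.filter (fun a => ∀ u ∈ N, a ∉ S u)).card = n →
    ∃ (c' : Sym2 V → ℕ) (S' : V → Finset ℕ), PC G K c' ∧ (∀ u ∈ N, S' u ⊆ K) ∧
      (∀ u ∈ N, ∀ y, G.Adj u y → c' s(u, y) ∉ S' u) ∧
      (∀ u ∈ N, (S' u).card = if u = u₀ then 1 else 2) ∧
      ∃ i ∈ K, (N.filter (fun u => i ∈ S' u)).card = 1 := by
  intro n
  induction n using Nat.strong_induction_on with
  | _ n ih =>
  intro c S hc hSK hmiss hcard hn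
  by_cases hex : ∃ i ∈ K, (N.filter (fun u => i ∈ S u)).card = 1
  · exact ⟨c, S, hc, hSK, hmiss, hcard, hex⟩
  push Not at hex
  have hsum : ∑ i ∈ K, (N.filter (fun u => i ∈ S u)).card + 1 = 2 * N.card := by
    have h1 : ∑ i ∈ K, (N.filter (fun u => i ∈ S u)).card = ∑ u ∈ N, (S u).card := by
      simp only [Finset.card_filter]
      rw [Finset.sum_comm]
      refine Finset.sum_congr rfl fun u hu => ?_
      rw [← Finset.card_filter, Finset.filter_mem_eq_inter, Finset.inter_eq_right.2 (hSK u hu)]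
    rw [h1, Finset.sum_congr rfl hcard, ← Finset.add_sum_erase N _ hu₀]
    rw [Finset.sum_congr rfl (g := fun _ => 2) (fun x hx => if_neg (Finset.ne_of_mem_erase hx))]
    have := Finset.card_erase_add_one hu₀
    simp
    omega
  obtain ⟨j, hj, hj0⟩ : ∃ j ∈ K, (N.filter (fun u => j ∈ S u)).card < 2 := by
    apply Finset.exists_lt_of_sum_lt
    simp only [Finset.sum_const, smul_eq_mul]
    omega
  have hj0' : (N.filter (fun u => j ∈ S u)).card = 0 := by
    have := hex j hj
    omega
  obtain ⟨i, hi, hi3⟩ : ∃ i ∈ K, ¬ 2 ∣ (N.filter (fun u => i ∈ S u)).card := by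
    by_contra! hcon
    have := Finset.dvd_sum hcon
    omega
  have hXi : 3 ≤ (N.filter (fun u => i ∈ S u)).card := by
    have := hex i hi
    omega
  have hXj : ∀ u ∈ N, j ∉ S u := by
    rw [Finset.card_eq_zero, Finset.filter_eq_empty_iff] at hj0'
    exact fun u hu => hj0' hu
  obtain ⟨c', S', h1, h2, h3, h4, h5⟩ := kempe G K c hc N S hSK hmiss i j hi hj hXi hXj
  exact ih _ (hn ▸ h5) c' S' h1 h2 h3 (fun u hu => (h4 u).trans (hcard u hu)) rfl

lemma extend {V : Type*} [Fintype V] [DecidableEq V] :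
    ∀ (k : ℕ) (K : Finset ℕ) (G : SimpleGraph V) (c : Sym2 V → ℕ) (N : Finset V)
    (S : V → Finset ℕ) (u₀ : V), K.card = k → N.card ≤ k → PC G K c → (∀ u ∈ N, S u ⊆ K) →
    (∀ u ∈ N, ∀ y, G.Adj u y → c s(u, y) ∉ S u) →
    (∀ u ∈ N, 1 ≤ (S u).card ∧ (u ≠ u₀ → 2 ≤ (S u).card)) →
    ∃ (c' : Sym2 V → ℕ) (f : V → ℕ), PC G K c' ∧ (∀ u ∈ N, f u ∈ K) ∧ Set.InjOn f N ∧
      ∀ u ∈ N, ∀ y, G.Adj u y → c' s(u, y) ≠ f u := by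
  classical
  intro k
  induction k with
  | zero =>
    intro K G c N S u₀ hK hN hc _ _ _
    have : N = ∅ := by simpa using hN
    subst this
    exact ⟨c, fun _ => 0, hc, by simp, by simp, by simp⟩
  | succ k ih =>
    intro K G c N S u₀ hK hN hc hSK hmiss hcard
    rcases N.eq_empty_or_nonempty with rfl | ⟨u₁, hu₁⟩
    · exact ⟨c, fun _ => 0, hc, by simp, by simp, by simp⟩
    obtain ⟨v₀, hv₀, hcard'⟩ : ∃ v₀ ∈ N, ∀ u ∈ N, (if u = v₀ then 1 else 2) ≤ (S u).card := by
      by_cases h : u₀ ∈ N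
      · refine ⟨u₀, h, fun u hu => ?_⟩
        split_ifs with h'
        · exact (hcard u hu).1
        · exact (hcard u hu).2 h'
      · refine ⟨u₁, hu₁, fun u hu => ?_⟩
        split_ifs with h'
        · exact (hcard u hu).1
        · exact (hcard u hu).2 (fun h'' => h (h'' ▸ hu))
    have htrim : ∀ u, ∃ T ⊆ S u, u ∈ N → T.card = if u = v₀ then 1 else 2 := by
      intro u
      by_cases hu : u ∈ N
      · obtain ⟨T, h1, h2⟩ := Finset.exists_subset_card_eq (hcard' u hu)
        exact ⟨T, h1, fun _ => h2⟩
      · exact ⟨∅, by simp, fun h => absurd h hu⟩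
    choose T hTS hTc using htrim
    obtain ⟨c₁, S₁, hc₁, hSK₁, hmiss₁, hcard₁, i, hi, hi1⟩ :=
      exists_singleton G K N (hK ▸ hN) v₀ hv₀ _ c T hc
        (fun u hu => (hTS u).trans (hSK u hu))
        (fun u hu y hy h => hmiss u hu y hy (hTS u h)) hTc rfl
    obtain ⟨u, hu⟩ := Finset.card_eq_one.1 hi1
    have hiu : ∀ w ∈ N, i ∈ S₁ w ↔ w = u := by
      intro w hw
      have : w ∈ N.filter (fun u => i ∈ S₁ u) ↔ w ∈ ({u} : Finset V) := by rw [hu]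
      simpa [hw] using this
    have huN : u ∈ N ∧ i ∈ S₁ u := by
      have : u ∈ N.filter (fun u => i ∈ S₁ u) := by rw [hu]; simp
      simpa using this
    let G' : SimpleGraph V :=
      { Adj := fun x y => G.Adj x y ∧ c₁ s(x, y) ≠ i
        symm := ⟨fun x y h => by rw [Sym2.eq_swap]; exact ⟨h.1.symm, h.2⟩⟩
        loopless := ⟨fun x h => G.loopless.irrefl x h.1⟩ }
    have hG' : ∀ x y, G'.Adj x y ↔ G.Adj x y ∧ c₁ s(x, y) ≠ i := fun x y => Iff.rfl
    obtain ⟨c₂, f, hc₂, hfK, hfinj, hf⟩ := ih (K.erase i) G' c₁ (N.erase u) S₁ v₀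
      (by rw [Finset.card_erase_of_mem hi]; omega)
      (by rw [Finset.card_erase_of_mem huN.1]; omega)
      ⟨fun x y h => Finset.mem_erase.2 ⟨h.2, hc₁.1 x y h.1⟩,
        fun x y z h1 h2 h => hc₁.2 x y z h1.1 h2.1 h⟩
      (by
        intro w hw a ha
        rw [Finset.mem_erase] at hw ⊢
        refine ⟨?_, hSK₁ w hw.2 ha⟩
        rintro rfl
        exact hw.1 ((hiu w hw.2).1 ha))
      (fun w hw y hy => hmiss₁ w (Finset.mem_of_mem_erase hw) y hy.1)
      (by
        intro w hw
        have := hcard₁ w (Finset.mem_of_mem_erase hw)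
        split_ifs at this with h
        · exact ⟨this.ge, fun h' => absurd h h'⟩
        · exact ⟨by omega, fun _ => this.ge⟩)
    have key : ∀ x y, G.Adj x y → c₁ s(x, y) ≠ i → c₂ s(x, y) ∈ K ∧ c₂ s(x, y) ≠ i := by
      intro x y h1 h2
      have := hc₂.1 x y ⟨h1, h2⟩
      rw [Finset.mem_erase] at this
      exact this.symm
    refine ⟨fun e => if c₁ e = i then i else c₂ e, Function.update f u i, ⟨?_, ?_⟩, ?_, ?_, ?_⟩
    · intro x y h
      dsimp only
      split_ifs with h'
      · exact hi
      · exact (key x y h h').1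
    · intro x y z h1 h2 h
      dsimp only at h
      split_ifs at h with h3 h4 h4
      · exact hc₁.2 x y z h1 h2 (h3.trans h4.symm)
      · exact absurd h.symm (key x z h2 h4).2
      · exact absurd h (key x y h1 h3).2
      · exact hc₂.2 x y z ⟨h1, h3⟩ ⟨h2, h4⟩ h
    · intro w hw
      by_cases hwu : w = u
      · subst hwu; simpa using hi
      · rw [Function.update_of_ne hwu]
        exact Finset.mem_of_mem_erase (hfK w (Finset.mem_erase.2 ⟨hwu, hw⟩))
    · have hne : ∀ w ∈ N, w ≠ u → f w ≠ i := fun w hw hwu =>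
        Finset.ne_of_mem_erase (hfK w (Finset.mem_erase.2 ⟨hwu, hw⟩))
      intro w hw z hz h
      by_cases hwu : w = u <;> by_cases hzu : z = u
      · rw [hwu, hzu]
      · subst hwu
        rw [Function.update_self, Function.update_of_ne hzu] at h
        exact absurd h.symm (hne z hz hzu)
      · subst hzu
        rw [Function.update_self, Function.update_of_ne hwu] at h
        exact absurd h (hne w hw hwu)
      · rw [Function.update_of_ne hwu, Function.update_of_ne hzu] at h
        exact hfinj (Finset.mem_coe.2 (Finset.mem_erase.2 ⟨hwu, hw⟩))
          (Finset.mem_coe.2 (Finset.mem_erase.2 ⟨hzu, hz⟩)) h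
    · intro w hw y hwy
      dsimp only
      by_cases hwu : w = u
      · subst hwu
        have h1 : c₁ s(w, y) ≠ i := fun h => hmiss₁ w hw y hwy (h ▸ huN.2)
        rw [Function.update_self, if_neg h1]
        exact (key w y hwy h1).2
      · rw [Function.update_of_ne hwu]
        have hmem : w ∈ N.erase u := Finset.mem_erase.2 ⟨hwu, hw⟩
        split_ifs with h
        · exact (Finset.ne_of_mem_erase (hfK w hmem)).symm
        · exact hf w hmem y ⟨hwy, h⟩

/-- Restriction of a graph to the edges inside `T`. -/
def restr {V : Type*} (G : SimpleGraph V) (T : Finset V) : SimpleGraph V where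
  Adj x y := G.Adj x y ∧ x ∈ T ∧ y ∈ T
  symm := ⟨fun _ _ h => ⟨h.1.symm, h.2.2, h.2.1⟩⟩
  loopless := ⟨fun x h => G.loopless.irrefl x h.1⟩

/-- Vizing's theorem. -/
lemma vizing {V : Type*} [Fintype V] [DecidableEq V] (G : SimpleGraph V) [DecidableRel G.Adj]
    (T : Finset V) : ∃ c, PC (restr G T) (Finset.range (G.maxDegree + 1)) c := by
  classical
  induction T using Finset.induction_on with
  | empty => exact ⟨fun _ => 0, fun x y h => by simp [restr] at h, fun x y z h => by simp [restr] at h⟩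
  | insert v T hv ih =>
    obtain ⟨c, hc⟩ := ih
    set K := Finset.range (G.maxDegree + 1) with hK
    have hdegT : ∀ u ∈ T.filter (G.Adj v),
        (((T.filter (G.Adj u)).image (fun y => c s(u, y))).card + 1 ≤ G.maxDegree) := by
      intro u hu
      rw [Finset.mem_filter] at hu
      have h1 : insert v (T.filter (G.Adj u)) ⊆ G.neighborFinset u := by
        intro y hy
        rw [SimpleGraph.mem_neighborFinset]
        rcases Finset.mem_insert.1 hy with rfl | hy
        · exact hu.2.symm
        · exact (Finset.mem_filter.1 hy).2
      have h2 := Finset.card_le_card h1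
      rw [Finset.card_insert_of_notMem (by simp [hv]), SimpleGraph.card_neighborFinset_eq_degree] at h2
      have h3 := G.degree_le_maxDegree u
      have h4 : ((T.filter (G.Adj u)).image (fun y => c s(u, y))).card ≤ _ := Finset.card_image_le
      omega
    have hcardS : ∀ u ∈ T.filter (G.Adj v),
        2 ≤ (K \ (T.filter (G.Adj u)).image (fun y => c s(u, y))).card := by
      intro u hu
      have h1 := hdegT u hu
      have h2 := Finset.le_card_sdiff ((T.filter (G.Adj u)).image (fun y => c s(u, y))) K
      rw [hK, Finset.card_range, ← hK] at h2
      omega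
    obtain ⟨c', f, hc', hfK, hfinj, hf⟩ := extend (G.maxDegree + 1) K (restr G T) c
      (T.filter (G.Adj v)) (fun u => K \ (T.filter (G.Adj u)).image (fun y => c s(u, y))) v
      (by simp [hK])
      (by
        have h1 : T.filter (G.Adj v) ⊆ G.neighborFinset v := by
          intro y hy
          rw [SimpleGraph.mem_neighborFinset]
          exact (Finset.mem_filter.1 hy).2
        have h2 := Finset.card_le_card h1
        rw [SimpleGraph.card_neighborFinset_eq_degree] at h2
        have h3 := G.degree_le_maxDegree v
        omega)
      hc (fun u _ => Finset.sdiff_subset)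
      (by
        intro u _ y hy h
        refine (Finset.mem_sdiff.1 h).2 (Finset.mem_image.2 ⟨y, ?_, rfl⟩)
        exact Finset.mem_filter.2 ⟨hy.2.2, hy.1⟩)
      (fun u hu => ⟨by have := hcardS u hu; omega, fun _ => hcardS u hu⟩)
    let d : Sym2 V → ℕ := fun e => if h : v ∈ e then f (Sym2.Mem.other h) else c' e
    have hd1 : ∀ y, d s(v, y) = f y := by
      intro y
      have hm : v ∈ s(v, y) := by simp
      have : d s(v, y) = f (Sym2.Mem.other hm) := dif_pos hm
      rw [this, Sym2.congr_right.1 (Sym2.other_spec hm)]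
    have hd1' : ∀ y, d s(y, v) = f y := by
      intro y
      rw [Sym2.eq_swap, hd1]
    have hd2 : ∀ x y, x ≠ v → y ≠ v → d s(x, y) = c' s(x, y) := by
      intro x y hx hy
      refine dif_neg ?_
      rw [Sym2.mem_iff]
      rintro (h | h)
      · exact hx h.symm
      · exact hy h.symm
    have hadjv : ∀ y, (restr G (insert v T)).Adj v y → y ∈ T.filter (G.Adj v) := by
      intro y h
      have hne : y ≠ v := h.1.ne'
      exact Finset.mem_filter.2 ⟨Finset.mem_of_mem_insert_of_ne h.2.2 hne, h.1⟩
    have hadj : ∀ x y, x ≠ v → y ≠ v → (restr G (insert v T)).Adj x y → (restr G T).Adj x y := by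
      intro x y hx hy h
      exact ⟨h.1, Finset.mem_of_mem_insert_of_ne h.2.1 hx, Finset.mem_of_mem_insert_of_ne h.2.2 hy⟩
    refine ⟨d, ?_, ?_⟩
    · intro x y h
      by_cases hx : x = v
      · subst hx
        rw [hd1]
        exact hfK y (hadjv y h)
      · by_cases hy : y = v
        · subst hy
          rw [hd1']
          exact hfK x (hadjv x h.symm)
        · rw [hd2 x y hx hy]
          exact hc'.1 x y (hadj x y hx hy h)
    · intro x y z h1 h2 h
      by_cases hx : x = v
      · subst hx
        rw [hd1, hd1] at h
        exact hfinj (hadjv y h1) (hadjv z h2) h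
      · by_cases hy : y = v <;> by_cases hz : z = v
        · rw [hy, hz]
        · subst hy
          rw [hd1', hd2 x z hx hz] at h
          exact absurd h.symm (hf x (hadjv x h1.symm) z (hadj x z hx hz h2))
        · subst hz
          rw [hd1', hd2 x y hx hy] at h
          exact absurd h (hf x (hadjv x h2.symm) y (hadj x y hx hy h1))
        · rw [hd2 x y hx hy, hd2 x z hx hz] at h
          exact hc'.2 x y z (hadj x y hx hy h1) (hadj x z hx hz h2) h

/-- **Existence of fair matching distributions.** For every finite simple graph
`G` with maximum degree `Δ ≥ 1`, there is a probability distribution (PMF) over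
matchings of `G` such that every vertex of degree `Δ` is left uncovered by the
random matching with probability at most `1/Δ`. -/
theorem exists_fair_matching_distribution {V : Type*} [Fintype V] [DecidableEq V]
    (G : SimpleGraph V) [DecidableRel G.Adj] (hΔ : 1 ≤ G.maxDegree) :
    ∃ p : PMF {M : Finset (Sym2 V) // IsMatchingSet G M},
      ∀ v : V, G.degree v = G.maxDegree →
        p.toOuterMeasure {M | ¬ ∃ e ∈ M.1, v ∈ e} ≤ 1 / (G.maxDegree : ENNReal) := by
  classical
  obtain ⟨c, hcK, hcp⟩ := vizing G Finset.univ
  have hadj : ∀ x y, G.Adj x y → (restr G Finset.univ).Adj x y := fun x y h => ⟨h, by simp, by simp⟩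
  let F : Fin (G.maxDegree + 1) → {M : Finset (Sym2 V) // IsMatchingSet G M} := fun i =>
    ⟨G.edgeFinset.filter (fun e => c e = i), by
      constructor
      · intro e he
        simp only [Finset.coe_filter, Set.mem_ofPred_eq, SimpleGraph.mem_edgeFinset] at he
        exact he.1
      · rintro e he f hf hne v ⟨hve, hvf⟩
        obtain ⟨y, rfl⟩ := hve
        obtain ⟨z, rfl⟩ := hvf
        simp only [Finset.mem_filter, SimpleGraph.mem_edgeFinset, SimpleGraph.mem_edgeSet] at he hf
        refine hne ?_
        rw [hcp v y z (hadj _ _ he.1) (hadj _ _ hf.1) (he.2.trans hf.2.symm)]⟩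
  refine ⟨(PMF.uniformOfFintype (Fin (G.maxDegree + 1))).map F, fun v hv => ?_⟩
  rw [PMF.toOuterMeasure_map_apply, PMF.toOuterMeasure_uniformOfFintype_apply]
  have hcard : Fintype.card ↑(F ⁻¹' {M | ¬ ∃ e ∈ M.1, v ∈ e}) ≤ 1 := by
    rw [← Set.toFinset_card]
    let B : Finset ℕ := (G.neighborFinset v).image (fun y => c s(v, y))
    have hB : B.card = G.maxDegree := by
      rw [Finset.card_image_of_injOn, SimpleGraph.card_neighborFinset_eq_degree, hv]
      intro y hy z hz h
      simp only [SimpleGraph.coe_neighborFinset, SimpleGraph.mem_neighborSet] at hy hz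
      exact hcp v y z (hadj _ _ hy) (hadj _ _ hz) h
    have hBK : B ⊆ Finset.range (G.maxDegree + 1) := by
      intro a ha
      obtain ⟨y, hy, rfl⟩ := Finset.mem_image.1 ha
      rw [SimpleGraph.mem_neighborFinset] at hy
      exact hcK v y (hadj _ _ hy)
    have h1 : (Finset.range (G.maxDegree + 1) \ B).card = 1 := by
      rw [Finset.card_sdiff_of_subset hBK, hB, Finset.card_range]
      omega
    refine le_trans ?_ h1.le
    apply Finset.card_le_card_of_injOn Fin.val
    · intro i hi
      simp only [Set.coe_toFinset, Set.mem_preimage, Set.mem_ofPred_eq] at hi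
      simp only [Finset.coe_sdiff, Set.mem_diff, Finset.mem_coe, Finset.mem_range]
      refine ⟨i.2, fun hiB => hi ?_⟩
      obtain ⟨y, hy, hyi⟩ := Finset.mem_image.1 hiB
      rw [SimpleGraph.mem_neighborFinset] at hy
      refine ⟨s(v, y), ?_, by simp⟩
      simp only [F, Finset.mem_filter, SimpleGraph.mem_edgeFinset, SimpleGraph.mem_edgeSet]
      exact ⟨hy, hyi⟩
    · exact Fin.val_injective.injOn
  rw [Fintype.card_fin]
  refine ENNReal.div_le_div (by exact_mod_cast hcard) ?_
  exact_mod_cast Nat.le_succ _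
end

section
/- There is an absolute constant C > 0 such that every finite simple graph G = (V, E) on n ≥ 2 vertices admits a proper edge coloring φ : E → ℕ with the property that every edge e = (u, v) satisfies φ(e) ≤ max(deg(u), deg(v)) + C · log n. -/
open Classical in
theorem three_ends {V : Type} [Fintype V] (K : SimpleGraph V)
    (h2 : ∀ v, K.degree v ≤ 2) (p q r : V) (hpq : p ≠ q) (hpr : p ≠ r) (hqr : q ≠ r)
    (hp : K.degree p ≤ 1) (hq : K.degree q ≤ 1) (hr : K.degree r ≤ 1)
    (h1 : K.Reachable p q) (h3 : K.Reachable p r) : False := by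
  set S : Set V := (K.connectedComponentMk p).supp with hS
  have hpS : p ∈ S := by simp [hS]
  have hqS : q ∈ S := by simpa [hS] using h1.symm
  have hrS : r ∈ S := by simpa [hS] using h3.symm
  have hc : (K.induce S).Connected := (K.connectedComponentMk p).connected_toSimpleGraph
  have hE := hc.card_vert_le_card_edgeSet_add_one
  have hsum := (K.induce S).sum_degrees_eq_twice_card_edges
  have hd : ∀ v : S, (K.induce S).degree v ≤ K.degree v := by
    intro v
    rw [← SimpleGraph.card_neighborFinset_eq_degree, ← SimpleGraph.card_neighborFinset_eq_degree]
    refine Finset.card_le_card_of_injOn (fun x => (x : V)) ?_ ?_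
    · intro x hx; simpa using hx
    · intro x _ y _ h; exact Subtype.ext h
  have hb : ∀ v : S, (K.induce S).degree v + ((if v = ⟨p, hpS⟩ then 1 else 0)
      + (if v = ⟨q, hqS⟩ then 1 else 0) + (if v = ⟨r, hrS⟩ then 1 else 0)) ≤ 2 := by
    intro v
    have := hd v
    have := h2 v
    by_cases e1 : v = ⟨p, hpS⟩
    · subst e1; simp [hpq, hpr]; simp at *; omega
    by_cases e2 : v = ⟨q, hqS⟩
    · subst e2; simp [hpq.symm, hqr]; simp at *; omega
    by_cases e3 : v = ⟨r, hrS⟩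
    · subst e3; simp [hpr.symm, hqr.symm]; simp at *; omega
    simp [e1, e2, e3]; omega
  have hs := Finset.sum_le_sum (s := Finset.univ) (fun v _ => hb v)
  simp only [Finset.sum_add_distrib, Finset.sum_ite_eq', Finset.mem_univ, if_true,
    Finset.sum_const, Finset.card_univ, smul_eq_mul] at hs
  rw [Nat.card_eq_fintype_card, Nat.card_eq_fintype_card, ← SimpleGraph.edgeFinset_card] at hE
  omega

/-- partial proper edge colouring with colours `1..k`; `0` means uncoloured -/
structure PCol {V : Type} (k : ℕ) (c : V → V → ℕ) : Prop where
  symm : ∀ u v, c u v = c v u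
  le : ∀ u v, c u v ≤ k
  proper : ∀ u v w, c u v = c u w → c u v ≠ 0 → v = w

/-- shifting a fan -/
theorem fan_shift {V : Type} {k : ℕ} (x : V) (a : ℕ) (ha0 : a ≠ 0) (hak : a ≤ k) :
    ∀ (j : ℕ) (c : V → V → ℕ) (y : ℕ → V), PCol k c → c x (y 0) = 0 →
    (∀ i ≤ j, x ≠ y i) → (∀ i ≤ j, ∀ i' ≤ j, y i = y i' → i = i') →
    (∀ i < j, c x (y (i+1)) ≠ 0) →
    (∀ i < j, ∀ w, c (y i) w ≠ c x (y (i+1))) →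
    (∀ w, c x w ≠ a) → (∀ w, c (y j) w ≠ a) →
    ∃ c', PCol k c' ∧ ∀ u v, c' u v ≠ 0 ↔ (c u v ≠ 0 ∨ (u = x ∧ v = y 0) ∨ (u = y 0 ∧ v = x)) := by
  classical
  intro j
  induction j with
  | zero =>
    intro c y hc h0 hx _ _ _ hax hay
    have hxy := hx 0 le_rfl
    refine ⟨fun u v => if (u = x ∧ v = y 0) ∨ (u = y 0 ∧ v = x) then a else c u v, ⟨?_, ?_, ?_⟩, ?_⟩
    · intro u v; have := hc.symm u v; grind
    · intro u v; have := hc.le u v; grind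
    · intro u v w; have := hc.proper u v w; grind
    · intro u v; grind
  | succ j ih =>
    intro c y hc h0 hx hinj hcol hmiss hax hay
    have hxy0 := hx 0 (by omega)
    have hxy1 := hx 1 (by omega)
    have h01 : y 0 ≠ y 1 := fun h => by have := hinj 0 (by omega) 1 (by omega) h; omega
    have hc1 := hcol 0 (by omega)
    have hm0 := hmiss 0 (by omega)
    simp only [zero_add] at hc1 hm0
    have hs0 := hc.symm x (y 0)
    have hs1 := hc.symm x (y 1)
    let c1 : V → V → ℕ := fun u v =>
      if (u = x ∧ v = y 0) ∨ (u = y 0 ∧ v = x) then c x (y 1) else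
      if (u = x ∧ v = y 1) ∨ (u = y 1 ∧ v = x) then 0 else c u v
    have hcp : PCol k c1 := by
      refine ⟨?_, ?_, ?_⟩
      · intro u v; have := hc.symm u v; grind
      · intro u v; have := hc.le u v; have := hc.le x (y 1); grind
      · intro u v w; have := hc.proper u v w
        have := hc.proper x (y 1) w
        have := hc.proper x (y 1) v
        grind
    have hy2 : ∀ i, 1 ≤ i → i ≤ j + 1 → y i ≠ y 0 := fun i h1 h2 h => by
      have := hinj i h2 0 (by omega) h; omega
    have hy3 : ∀ i, 2 ≤ i → i ≤ j + 1 → y i ≠ y 1 := fun i h1 h2 h => by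
      have := hinj i h2 1 (by omega) h; omega
    have e2 : ∀ i, 2 ≤ i → i ≤ j + 1 → c1 x (y i) = c x (y i) := by
      intro i h1 h2
      have := hy2 i (by omega) h2
      have := hy3 i (by omega) h2
      grind
    have e3 : ∀ i, 1 ≤ i → i ≤ j + 1 → ∀ w, c1 (y i) w = c (y i) w ∨ c1 (y i) w = 0 := by
      intro i h1 h2 w
      have := hy2 i (by omega) h2
      have := hx i h2
      grind
    obtain ⟨c', hc', hc'2⟩ := ih c1 (fun i => y (i+1)) hcp (by grind)
      (fun i hi => hx _ (by omega))
      (fun i hi i' hi' h => by have := hinj (i+1) (by omega) (i'+1) (by omega) h; omega)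
      (fun i hi => by
        have := hcol (i+1) (by omega)
        rw [e2 (i+1+1) (by omega) (by omega)]; exact this)
      (fun i hi w => by
        have h1 := hcol (i+1) (by omega)
        have h2 := hmiss (i+1) (by omega) w
        have h3 := e3 (i+1) (by omega) (by omega) w
        rw [e2 (i+1+1) (by omega) (by omega)]
        grind)
      (fun w => by have := hax w; have := hax (y 1); grind)
      (fun w => by
        have h2 := hay w
        have h3 := e3 (j+1) (by omega) (by omega) w
        grind)
    refine ⟨c', hc', fun u v => ?_⟩
    rw [hc'2]
    grind

/-- Kempe swap -/
theorem kempe_s12 {V : Type} {k : ℕ} (c : V → V → ℕ) (hc : PCol k c) (a b : ℕ)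
    (ha0 : a ≠ 0) (hb0 : b ≠ 0) (hak : a ≤ k) (hbk : b ≤ k) (S : Set V)
    (hS : ∀ u v, u ∈ S → (c u v = a ∨ c u v = b) → v ∈ S) :
    ∃ c' : V → V → ℕ, PCol k c' ∧ (∀ u v, c' u v = 0 ↔ c u v = 0) ∧
      (∀ u v, u ∉ S → c' u v = c u v) ∧
      (∀ u v, u ∈ S → c' u v = if c u v = a then b else if c u v = b then a else c u v) := by
  classical
  refine ⟨fun u v => if u ∈ S then (if c u v = a then b else if c u v = b then a else c u v)
    else c u v, ⟨?_, ?_, ?_⟩, ?_, ?_, ?_⟩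
  · intro u v
    have h1 := hc.symm u v
    have h2 := hS u v
    have h3 := hS v u
    grind
  · intro u v; have := hc.le u v; grind
  · intro u v w; have := hc.proper u v w; grind
  · intro u v; grind
  · intro u v h; simp [h]
  · intro u v h; simp [h]

theorem exists_missing {V : Type} [Fintype V] (G : SimpleGraph V) [DecidableRel G.Adj] (t : ℕ)
    (c : V → V → ℕ) (hG : ∀ u v, c u v ≠ 0 → G.Adj u v) (v : V) (hd : G.degree v ≤ t) :
    ∃ a, a ≠ 0 ∧ a ≤ t + 1 ∧ ∀ w, c v w ≠ a := by
  classical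
  have h : ((G.neighborFinset v).image (c v)).card < (Finset.Icc 1 (t+1)).card := by
    refine lt_of_le_of_lt Finset.card_image_le ?_
    simp; omega
  obtain ⟨a, ha, hna⟩ := Finset.exists_mem_notMem_of_card_lt_card h
  rw [Finset.mem_Icc] at ha
  refine ⟨a, by omega, by omega, fun w hw => hna ?_⟩
  rw [Finset.mem_image]
  exact ⟨w, by simpa using hG v w (by omega), hw⟩

open Classical in
theorem kempe_ends {V : Type} [Fintype V] {k : ℕ} (c : V → V → ℕ) (hc : PCol k c)
    (hirr : ∀ u, c u u = 0) (a b : ℕ) (ha0 : a ≠ 0) (hb0 : b ≠ 0)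
    (p q r : V) (hpq : p ≠ q) (hpr : p ≠ r) (hqr : q ≠ r)
    (hp : ∀ w, c p w ≠ a) (hq : ∀ w, c q w ≠ b) (hr : ∀ w, c r w ≠ b) :
    ∃ S : Set V, (∀ u v, u ∈ S → (c u v = a ∨ c u v = b) → v ∈ S) ∧ p ∉ S ∧
      (q ∈ S ∨ (q ∉ S ∧ r ∈ S)) := by
  obtain ⟨K, hadj⟩ : ∃ K : SimpleGraph V, ∀ u v, K.Adj u v ↔ (c u v = a ∨ c u v = b) := ⟨
    { Adj := fun u v => c u v = a ∨ c u v = b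
      symm := ⟨fun u v h => by rw [hc.symm v u]; exact h⟩
      loopless := ⟨fun u h => by have := hirr u; omega⟩ }, fun u v => Iff.rfl⟩
  have hinj : ∀ v : V, Set.InjOn (c v) (K.neighborFinset v : Set V) := by
    intro v x hx y hy h
    have : K.Adj v x := by simpa using hx
    rw [hadj] at this
    exact hc.proper v x y h (by omega)
  have hdeg : ∀ v : V, ∀ T : Finset ℕ, (∀ w, K.Adj v w → c v w ∈ T) → K.degree v ≤ T.card := by
    intro v T hT
    rw [← SimpleGraph.card_neighborFinset_eq_degree]
    exact Finset.card_le_card_of_injOn (c v) (fun x hx => hT x (by simpa using hx)) (hinj v)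
  have hcl : ∀ s u v, u ∈ {v | K.Reachable s v} → (c u v = a ∨ c u v = b) →
      v ∈ {v | K.Reachable s v} := by
    intro s u v hu h
    have h' : K.Adj u v := (hadj u v).2 h
    exact SimpleGraph.Reachable.trans hu h'.reachable
  by_cases h1 : K.Reachable p q
  · have h2 : ¬ K.Reachable p r := fun h3 => by
      refine three_ends K ?_ p q r hpq hpr hqr ?_ ?_ ?_ h1 h3
      · intro v
        exact (hdeg v {a, b} (fun w hw => by rw [hadj] at hw; simpa using hw)).trans Finset.card_le_two
      · refine (hdeg p {b} (fun w hw => ?_)).trans (Finset.card_singleton _).le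
        rw [hadj] at hw; have := hp w; simp; tauto
      · refine (hdeg q {a} (fun w hw => ?_)).trans (Finset.card_singleton _).le
        rw [hadj] at hw; have := hq w; simp; tauto
      · refine (hdeg r {a} (fun w hw => ?_)).trans (Finset.card_singleton _).le
        rw [hadj] at hw; have := hr w; simp; tauto
    refine ⟨{v | K.Reachable r v}, hcl r, fun h => h2 (SimpleGraph.Reachable.symm h), Or.inr ⟨?_, ?_⟩⟩
    · intro h
      exact h2 (h1.trans (SimpleGraph.Reachable.symm h))
    · exact SimpleGraph.Reachable.refl _
  · exact ⟨{v | K.Reachable q v}, hcl q, fun h => h1 (SimpleGraph.Reachable.symm h),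
      Or.inl (SimpleGraph.Reachable.refl _)⟩

theorem extend_col {V : Type} [Fintype V] (G : SimpleGraph V) [DecidableRel G.Adj] (t : ℕ)
    (hd : ∀ v, G.degree v ≤ t) (c : V → V → ℕ) (hc : PCol (t+1) c)
    (hG : ∀ u v, c u v ≠ 0 → G.Adj u v) (x y0 : V) (hxy : G.Adj x y0) (h0 : c x y0 = 0) :
    ∃ c', PCol (t+1) c' ∧
      ∀ u v, c' u v ≠ 0 ↔ (c u v ≠ 0 ∨ (u = x ∧ v = y0) ∨ (u = y0 ∧ v = x)) := by
  classical
  have hirr : ∀ u, c u u = 0 := fun u => by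
    by_contra h; exact G.loopless.irrefl u (hG u u h)
  choose m hm0 hmk hm using fun v => exists_missing G t c hG v (hd v)
  let f : V → V := fun y => if h : ∃ z, c x z = m y then h.choose else y
  have hf : ∀ y, (∃ z, c x z = m y) → c x (f y) = m y := by
    intro y h
    simp only [f, dif_pos h]
    exact h.choose_spec
  let y : ℕ → V := fun i => f^[i] y0
  have hy0 : y 0 = y0 := rfl
  have hys : ∀ i, y (i+1) = f (y i) := fun i => Function.iterate_succ_apply' f i y0
  have hyadd : ∀ d i i', y i = y i' → y (i + d) = y (i' + d) := by
    intro d i i' h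
    induction d with
    | zero => exact h
    | succ d ih => rw [← add_assoc, ← add_assoc, hys, hys, ih]
  by_cases hP : ∀ i, ∃ z, c x z = m (y i)
  · have hcx : ∀ i, c x (y (i+1)) = m (y i) := fun i => by rw [hys]; exact hf _ (hP i)
    have hrep : ∃ i', ∃ i, i < i' ∧ y i = y i' := by
      obtain ⟨i, i', hne, h⟩ := Finite.exists_ne_map_eq_of_infinite y
      rcases lt_or_gt_of_ne hne with h1 | h1
      · exact ⟨i', i, h1, h⟩
      · exact ⟨i, i', h1, h.symm⟩
    obtain ⟨i, hi, hyi⟩ := Nat.find_spec hrep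
    have hmin : ∀ j' < Nat.find hrep, ∀ j < j', y j ≠ y j' := by
      intro j' hj' j hj h
      exact Nat.find_min hrep hj' ⟨j, hj, h⟩
    generalize Nat.find hrep = N at hi hyi hmin
    obtain ⟨q, rfl⟩ : ∃ q, N = q + 1 := ⟨N - 1, by omega⟩
    have hi0 : i ≠ 0 := by
      rintro rfl
      have := hcx q
      rw [← hyi, hy0, h0] at this
      exact hm0 _ this.symm
    obtain ⟨p, rfl⟩ : ∃ p, i = p + 1 := ⟨i - 1, by omega⟩
    have hpq : p < q := by omega
    have hinj : ∀ i ≤ q, ∀ i' ≤ q, y i = y i' → i = i' := by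
      intro i hi i' hi' h
      rcases lt_trichotomy i i' with h1 | h1 | h1
      · exact absurd h (hmin i' (by omega) i h1)
      · exact h1
      · exact absurd h.symm (hmin i (by omega) i' h1)
    have hb : m (y p) = m (y q) := by rw [← hcx, ← hcx, hyi]
    have hxy' : ∀ i, x ≠ y i := by
      intro i h
      cases i with
      | zero => exact hxy.ne h
      | succ i =>
        have := hcx i
        rw [← h, hirr] at this
        exact hm0 _ this.symm
    have hab : m x ≠ m (y p) := by
      rw [← hcx]; exact (hm x _).symm
    obtain ⟨S, hS, hxS, hpqS⟩ := kempe_ends c hc hirr (m x) (m (y p)) (hm0 _) (hm0 _) x (y p) (y q)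
      (hxy' p) (hxy' q) (fun h => by have := hinj p (by omega) q le_rfl h; omega) (hm x) (hm (y p))
      (by rw [hb]; exact hm (y q))
    obtain ⟨c', hc', hz, hnS, hinS⟩ := kempe_s12 c hc (m x) (m (y p)) (hm0 _) (hm0 _) (hmk _) (hmk _) S hS
    have key : ∀ r ≤ q, y r ∈ S → m (y r) = m (y p) → (r ≤ p ∨ y p ∉ S) →
        ∃ c', PCol (t+1) c' ∧
          ∀ u v, c' u v ≠ 0 ↔ (c u v ≠ 0 ∨ (u = x ∧ v = y0) ∨ (u = y0 ∧ v = x)) := by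
      intro r hr hrS hmr hrp
      obtain ⟨c2, hc2, hc2'⟩ := fan_shift x (m x) (hm0 x) (hmk x) r c' y hc'
        (by rw [hz]; exact h0) (fun i _ => hxy' i)
        (fun i hi i' hi' => hinj i (by omega) i' (by omega))
        (fun i hi => by rw [hnS x _ hxS, hcx]; exact hm0 _)
        (fun i hi w => by
          rw [hnS x _ hxS, hcx]
          have h1 : m (y i) ≠ m x := by rw [← hcx]; exact hm x _
          have h2 := hm (y i) w
          by_cases hiS : y i ∈ S
          · have h3 : m (y i) ≠ m (y p) := by
              intro h
              have h4 : y (i+1) = y (p+1) := by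
                refine hc.proper x _ _ ?_ ?_
                · rw [hcx, hcx, h]
                · rw [hcx]; exact hm0 _
              have h5 := hinj (i+1) (by omega) (p+1) (by omega) h4
              have h6 : i = p := by omega
              subst h6
              rcases hrp with h7 | h7
              · omega
              · exact h7 hiS
            rw [hinS _ _ hiS]
            split_ifs
            · exact h3.symm
            · exact h1.symm
            · exact h2
          · rw [hnS _ _ hiS]; exact h2)
        (fun w => by rw [hnS x _ hxS]; exact hm x w)
        (fun w => by
          rw [hinS _ _ hrS]
          have h2 := hm (y r) w
          rw [hmr] at h2
          split_ifs with h3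
          · exact hab.symm
          · exact h3)
      refine ⟨c2, hc2, fun u v => ?_⟩
      rw [hc2', hy0]; simp only [ne_eq, hz]
    rcases hpqS with h | ⟨h, h'⟩
    · exact key p hpq.le h rfl (Or.inl le_rfl)
    · exact key q le_rfl h' hb.symm (Or.inr h)
  · push Not at hP
    have hspec := Nat.find_spec hP
    have hmin : ∀ i < Nat.find hP, ∃ z, c x z = m (y i) := by
      intro i hi
      have := Nat.find_min hP hi
      push Not at this
      exact this
    generalize Nat.find hP = j at hspec hmin
    have hcx : ∀ i < j, c x (y (i+1)) = m (y i) := fun i hi => by rw [hys]; exact hf _ (hmin i hi)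
    have hlt : ∀ i i', i < i' → i' ≤ j → y i ≠ y i' := by
      intro i i' h1 h2 h
      have := hyadd (j - i') i i' h
      rw [Nat.add_sub_cancel' h2] at this
      obtain ⟨z, hz⟩ := hmin (i + (j - i')) (by omega)
      rw [this] at hz
      exact hspec z hz
    obtain ⟨c2, hc2, hc2'⟩ := fan_shift x (m (y j)) (hm0 _) (hmk _) j c y hc h0
      (fun i hi h => by
        cases i with
        | zero => exact hxy.ne h
        | succ i =>
          have := hcx i (by omega)
          rw [← h, hirr] at this
          exact hm0 _ this.symm)
      (fun i hi i' hi' h => by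
        rcases lt_trichotomy i i' with h1 | h1 | h1
        · exact absurd h (hlt i i' h1 hi')
        · exact h1
        · exact absurd h.symm (hlt i' i h1 hi))
      (fun i hi => by rw [hcx i hi]; exact hm0 _)
      (fun i hi w => by rw [hcx i hi]; exact hm _ w)
      hspec (hm _)
    refine ⟨c2, ?_, hc2'⟩
    exact hc2

/-- Vizing theorem on edge colourings -/
theorem vizing_s12 {V : Type} [Fintype V] (G : SimpleGraph V) [DecidableRel G.Adj] (t : ℕ)
    (hd : ∀ v, G.degree v ≤ t) :
    ∃ c : V → V → ℕ, PCol (t+1) c ∧ ∀ u v, c u v ≠ 0 ↔ G.Adj u v := by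
  classical
  have main : ∀ A : Finset (V × V), ∃ c : V → V → ℕ, PCol (t+1) c ∧
      (∀ u v, c u v ≠ 0 → G.Adj u v) ∧ ∀ u v, (u, v) ∈ A → G.Adj u v → c u v ≠ 0 := by
    intro A
    induction A using Finset.induction_on with
    | empty => exact ⟨fun _ _ => 0, ⟨by simp, by simp, by simp⟩, by simp, by simp⟩
    | insert e A he ih =>
      obtain ⟨c, hc, hcG, hcA⟩ := ih
      obtain ⟨x, y⟩ := e
      by_cases h : G.Adj x y ∧ c x y = 0
      · obtain ⟨c', hc', h'⟩ := extend_col G t hd c hc hcG x y h.1 h.2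
        refine ⟨c', hc', ?_, ?_⟩
        · intro u v huv
          rcases (h' u v).1 huv with h1 | ⟨rfl, rfl⟩ | ⟨rfl, rfl⟩
          · exact hcG _ _ h1
          · exact h.1
          · exact h.1.symm
        · intro u v huv hadj
          rw [h']
          rw [Finset.mem_insert] at huv
          rcases huv with h1 | h1
          · simp only [Prod.mk.injEq] at h1; exact Or.inr (Or.inl h1)
          · exact Or.inl (hcA u v h1 hadj)
      · refine ⟨c, hc, hcG, ?_⟩
        intro u v huv hadj
        rw [Finset.mem_insert] at huv
        rcases huv with h1 | h1
        · simp only [Prod.mk.injEq] at h1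
          obtain ⟨rfl, rfl⟩ := h1
          intro h2; exact h ⟨hadj, h2⟩
        · exact hcA u v h1 hadj
  obtain ⟨c, hc, h1, h2⟩ := main Finset.univ
  exact ⟨c, hc, fun u v => ⟨h1 u v, h2 u v (Finset.mem_univ _)⟩⟩

open Classical in
theorem tight_missing {V : Type} [Fintype V] (R : SimpleGraph V) (t : ℕ)
    (c : V → V → ℕ) (hc : PCol (t+1) c) (hR : ∀ u v, c u v ≠ 0 ↔ R.Adj u v) (v : V)
    (hv : R.degree v = t) (a b : ℕ) (ha0 : a ≠ 0) (hb0 : b ≠ 0) (hak : a ≤ t + 1) (hbk : b ≤ t + 1)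
    (ha : ∀ w, c v w ≠ a) (hb : ∀ w, c v w ≠ b) : a = b := by
  by_contra hab
  have h1 : (R.neighborFinset v).card ≤ (((Finset.Icc 1 (t+1)).erase a).erase b).card := by
    refine Finset.card_le_card_of_injOn (c v) ?_ ?_
    · intro x hx
      have hx' : R.Adj v x := by simpa using hx
      have := (hR v x).2 hx'
      have := hc.le v x
      have := ha x
      have := hb x
      simp; omega
    · intro x hx y hy h
      have hx' : R.Adj v x := by simpa using hx
      exact hc.proper v x y h ((hR v x).2 hx')
  rw [SimpleGraph.card_neighborFinset_eq_degree, hv, Finset.card_erase_of_mem,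
    Finset.card_erase_of_mem, Nat.card_Icc] at h1
  · omega
  · simp; omega
  · simp; omega

open Classical in
theorem main_ind {V : Type} [Fintype V] : ∀ (t : ℕ) (R : SimpleGraph V)
    (_ : ∀ v, R.degree v ≤ t) (w : V → ℕ),
    ∃ φ : V → V → ℕ, (∀ u v, φ u v = φ v u) ∧
      (∀ u v, R.Adj u v → φ u v ≤ max (R.degree u) (R.degree v)) ∧
      (∀ u v x, R.Adj u v → R.Adj u x → φ u v = φ u x → φ u v ≠ 0 → v = x) ∧
      6 * ∑ v, w v * 2 ^ (Finset.univ.filter (fun u => R.Adj v u ∧ φ v u = 0)).card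
        ≤ (t + 2) * (t + 3) * ∑ v, w v := by
  intro t
  induction t with
  | zero =>
    intro R hd w
    have hno : ∀ u v, ¬ R.Adj u v := by
      intro u v h
      have h1 := hd u
      have h2 : 0 < R.degree u := (R.degree_pos_iff_exists_adj u).2 ⟨v, h⟩
      omega
    refine ⟨fun _ _ => 0, by simp, ?_, ?_, ?_⟩
    · intro u v h; exact absurd h (hno u v)
    · intro u v x h; exact absurd h (hno u v)
    · simp [hno]
  | succ t ih =>
    intro R hd w
    obtain ⟨c, hc, hR⟩ := vizing_s12 R (t+1) hd
    choose m hm0 hmk hm using fun v => exists_missing R (t+1) c (fun u v => (hR u v).1) v (hd v)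
    have hsym := hc.symm
    obtain ⟨Fa, hFa⟩ : ∃ Fa : ℕ → ℕ → V → V → Prop, ∀ a b u v, Fa a b u v ↔ (c u v = b ∧
      ((R.degree u = t + 1 ∧ m u = a) ∨ (R.degree v = t + 1 ∧ m v = a))) := ⟨_, fun _ _ _ _ => Iff.rfl⟩
    obtain ⟨inc, hinc⟩ : ∃ inc : ℕ → ℕ → V → ℕ, ∀ a b v, inc a b v = if ∃ x, Fa a b v x then 1 else 0 :=
      ⟨_, fun _ _ _ => rfl⟩
    set P := (Finset.Icc 1 (t+2)).offDiag with hP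
    have hPc : P.card = (t+2) * (t+1) := by
      rw [hP, Finset.offDiag_card, Nat.card_Icc, Nat.add_sub_cancel, ← Nat.mul_sub_one]; rfl
    have hcount : ∀ v, ∑ ab ∈ P, inc ab.1 ab.2 v ≤ 2 * (t+1) := by
      intro v
      simp only [hinc]
      rw [← Finset.card_filter]
      have hsub : P.filter (fun ab => ∃ x, Fa ab.1 ab.2 v x) ⊆
          (R.neighborFinset v).image (fun x => (m v, c v x)) ∪
          (R.neighborFinset v).image (fun x => (m x, c v x)) := by
        rintro ⟨a, b⟩ hab
        simp only [Finset.mem_filter, hP, Finset.mem_offDiag, Finset.mem_Icc, hFa] at hab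
        obtain ⟨⟨_, hb, _⟩, x, hx, h⟩ := hab
        have hadj : R.Adj v x := (hR v x).1 (by omega)
        simp only [Finset.mem_union, Finset.mem_image, SimpleGraph.mem_neighborFinset, Prod.mk.injEq]
        rcases h with h | h
        · exact Or.inl ⟨x, hadj, h.2, hx⟩
        · exact Or.inr ⟨x, hadj, h.2, hx⟩
      refine (Finset.card_le_card hsub).trans ((Finset.card_union_le _ _).trans ?_)
      have h1 := Finset.card_image_le (s := R.neighborFinset v) (f := fun x => (m v, c v x))
      have h2 := Finset.card_image_le (s := R.neighborFinset v) (f := fun x => (m x, c v x))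
      rw [SimpleGraph.card_neighborFinset_eq_degree] at h1 h2
      have := hd v
      omega
    obtain ⟨⟨a, b⟩, habP, hab⟩ : ∃ ab ∈ P, (t+2) * ∑ v, w v * (1 + inc ab.1 ab.2 v) ≤ (t+4) * ∑ v, w v := by
      apply Finset.exists_le_of_sum_le
      · rw [← Finset.card_pos, hPc]; positivity
      · rw [← Finset.mul_sum, Finset.sum_comm, Finset.sum_const, hPc, smul_eq_mul]
        have : ∑ v, ∑ ab ∈ P, w v * (1 + inc ab.1 ab.2 v) ≤ ∑ v, w v * ((t+1) * (t+4)) := by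
          refine Finset.sum_le_sum fun v _ => ?_
          rw [← Finset.mul_sum, Finset.sum_add_distrib, Finset.sum_const, hPc, smul_eq_mul, mul_one]
          refine Nat.mul_le_mul le_rfl ?_
          have := hcount v
          nlinarith
        rw [← Finset.sum_mul] at this
        calc _ ≤ (t+2) * ((∑ v, w v) * ((t+1) * (t+4))) := Nat.mul_le_mul le_rfl this
          _ = _ := by ring
    simp only [hP, Finset.mem_offDiag, Finset.mem_Icc] at habP
    obtain ⟨⟨ha1, ha2⟩, ⟨hb1, hb2⟩, hne⟩ := habP
    simp only at hab
    have hFs : ∀ u v, Fa a b u v ↔ Fa a b v u := by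
      intro u v; rw [hFa, hFa, hsym u v]; tauto
    obtain ⟨Mm, hM⟩ : ∃ Mm : V → V → Prop, ∀ u v, Mm u v ↔
      (c u v = a ∧ (R.degree u = t + 1 ∨ R.degree v = t + 1)) := ⟨_, fun _ _ => Iff.rfl⟩
    have hMs : ∀ u v, Mm u v ↔ Mm v u := by
      intro u v; rw [hM, hM, hsym u v]; tauto
    obtain ⟨R', hR'⟩ : ∃ R' : SimpleGraph V, ∀ u v, R'.Adj u v ↔ (R.Adj u v ∧ ¬ Mm u v ∧ ¬ Fa a b u v) :=
      ⟨{ Adj := fun u v => R.Adj u v ∧ ¬ Mm u v ∧ ¬ Fa a b u v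
         symm := ⟨fun u v h => by rw [hMs v u, hFs v u, R.adj_comm]; exact h⟩
         loopless := ⟨fun u h => R.loopless.irrefl u h.1⟩ }, fun _ _ => Iff.rfl⟩
    have hsub : ∀ v, R'.neighborFinset v ⊆ R.neighborFinset v := by
      intro v x hx
      rw [SimpleGraph.mem_neighborFinset] at hx ⊢
      exact ((hR' v x).1 hx).1
    have hle : ∀ v, R'.degree v ≤ R.degree v := fun v => by
      rw [← SimpleGraph.card_neighborFinset_eq_degree, ← SimpleGraph.card_neighborFinset_eq_degree]
      exact Finset.card_le_card (hsub v)
    have hd' : ∀ v, R'.degree v ≤ t := by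
      intro v
      by_cases hv : R.degree v = t + 1
      · have hx : ∃ x, R.Adj v x ∧ ¬ R'.Adj v x := by
          by_cases h1 : ∃ x, c v x = a
          · obtain ⟨x, hx⟩ := h1
            refine ⟨x, (hR v x).1 (by omega), ?_⟩
            rw [hR', hM]; tauto
          · push Not at h1
            have hma : m v = a := tight_missing R (t+1) c hc hR v hv (m v) a (hm0 v) (by omega)
              (hmk v) (by omega) (hm v) h1
            have h2 : ∃ x, c v x = b := by
              by_contra h2
              push Not at h2
              exact hne (tight_missing R (t+1) c hc hR v hv a b (by omega) (by omega)
                (by omega) (by omega) h1 h2)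
            obtain ⟨x, hx⟩ := h2
            refine ⟨x, (hR v x).1 (by omega), ?_⟩
            rw [hR', hFa]; tauto
        obtain ⟨x, hx1, hx2⟩ := hx
        have : (R'.neighborFinset v).card < (R.neighborFinset v).card := by
          apply Finset.card_lt_card
          refine ⟨hsub v, fun h => hx2 ?_⟩
          have := h ((R.mem_neighborFinset v x).2 hx1)
          simpa using this
        rw [SimpleGraph.card_neighborFinset_eq_degree, SimpleGraph.card_neighborFinset_eq_degree] at this
        omega
      · have := hle v
        have := hd v
        omega
    obtain ⟨φ, hφs, hφb, hφp, hφw⟩ := ih R' hd' (fun v => w v * (1 + inc a b v))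
    have hφt : ∀ u v, R'.Adj u v → φ u v ≤ t := fun u v h =>
      (hφb u v h).trans (max_le (hd' u) (hd' v))
    obtain ⟨ψ, hψ⟩ : ∃ ψ : V → V → ℕ, ∀ u v, ψ u v = if Mm u v then t + 1 else
      if Fa a b u v then 0 else φ u v := ⟨_, fun _ _ => rfl⟩
    refine ⟨ψ, ?_, ?_, ?_, ?_⟩
    · intro u v
      simp only [hψ, hMs u v, hFs u v, hφs u v]
    · intro u v h
      rw [hψ]
      split_ifs with h1 h2
      · rw [hM] at h1
        rcases h1.2 with h3 | h3 <;> simp [h3]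
      · simp
      · exact (hφb u v ((hR' u v).2 ⟨h, h1, h2⟩)).trans (max_le_max (hle u) (hle v))
    · intro u v x h1 h2
      have e1 := hR' u v
      have e2 := hR' u x
      have e3 := hφt u v
      have e4 := hφt u x
      have e5 := hφp u v x
      have e6 := hc.proper u v x
      have e7 := hM u v
      have e8 := hM u x
      rw [hψ, hψ]
      split_ifs <;> grind
    · have hcard : ∀ v, (Finset.univ.filter (fun u => R.Adj v u ∧ ψ v u = 0)).card ≤
          (Finset.univ.filter (fun u => R'.Adj v u ∧ φ v u = 0)).card + inc a b v := by
        intro v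
        have h1 : (Finset.univ.filter (fun u => Fa a b v u)).card ≤ inc a b v := by
          rw [hinc]
          split_ifs with h
          · rw [Finset.card_le_one]
            intro x hx y hy
            simp only [Finset.mem_filter, Finset.mem_univ, true_and, hFa] at hx hy
            exact hc.proper v x y (by omega) (by omega)
          · push Not at h
            simp [h]
        refine le_trans (Finset.card_le_card ?_) ((Finset.card_union_le _ _).trans
          (Nat.add_le_add_left h1 _))
        intro x hx
        simp only [Finset.mem_filter, Finset.mem_univ, true_and, Finset.mem_union, hψ, hR'] at hx ⊢
        obtain ⟨h2, h3⟩ := hx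
        split_ifs at h3 with h4 h5
        · exact Or.inr h5
        · exact Or.inl ⟨⟨h2, h4, h5⟩, h3⟩
      have hinc2 : ∀ v, 2 ^ inc a b v = 1 + inc a b v := by
        intro v; rw [hinc]; split_ifs <;> rfl
      have h1 : ∑ v, w v * 2 ^ (Finset.univ.filter (fun u => R.Adj v u ∧ ψ v u = 0)).card ≤
          ∑ v, w v * (1 + inc a b v) *
            2 ^ (Finset.univ.filter (fun u => R'.Adj v u ∧ φ v u = 0)).card := by
        refine Finset.sum_le_sum fun v _ => ?_
        rw [mul_assoc, ← hinc2, ← pow_add, add_comm (inc a b v)]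
        exact Nat.mul_le_mul le_rfl (Nat.pow_le_pow_right (by norm_num) (hcard v))
      calc _ ≤ _ := Nat.mul_le_mul le_rfl h1
        _ ≤ _ := hφw
        _ = (t+3) * ((t+2) * ∑ v, w v * (1 + inc a b v)) := by ring
        _ ≤ (t+3) * ((t+4) * ∑ v, w v) := Nat.mul_le_mul le_rfl hab
        _ = _ := by ring

open Classical in
theorem nat_version {V : Type} [Fintype V] (G : SimpleGraph V) (hn : 2 ≤ Fintype.card V) :
    ∃ (K : ℕ) (ψ : V → V → ℕ), 2 ^ K ≤ (Fintype.card V) ^ 3 ∧ (∀ u v, ψ u v = ψ v u) ∧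
      (∀ u v, G.Adj u v → ψ u v ≤ max (G.degree u) (G.degree v) + (K + 1)) ∧
      (∀ u v x, G.Adj u v → G.Adj u x → ψ u v = ψ u x → v = x) := by
  obtain ⟨t, ht⟩ : ∃ t, Fintype.card V = t + 1 := ⟨Fintype.card V - 1, by omega⟩
  have hd : ∀ v, G.degree v ≤ t := fun v => by
    have := G.degree_lt_card_verts v; omega
  obtain ⟨φ, hs, hb, hp, hw⟩ := main_ind t G hd (fun _ => 1)
  obtain ⟨F, hF⟩ : ∃ F : SimpleGraph V, ∀ u v, F.Adj u v ↔ (G.Adj u v ∧ φ u v = 0) :=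
    ⟨{ Adj := fun u v => G.Adj u v ∧ φ u v = 0
       symm := ⟨fun u v h => by rw [hs v u, G.adj_comm]; exact h⟩
       loopless := ⟨fun u h => G.loopless.irrefl u h.1⟩ }, fun _ _ => Iff.rfl⟩
  have hFd : ∀ v, F.degree v = (Finset.univ.filter (fun u => G.Adj v u ∧ φ v u = 0)).card := by
    intro v
    rw [← SimpleGraph.card_neighborFinset_eq_degree]
    congr 1
    ext x
    simp [hF]
  obtain ⟨c, hc, hcF⟩ := vizing_s12 F F.maxDegree (fun v => F.degree_le_maxDegree v)
  have : Nonempty V := Fintype.card_pos_iff.1 (by omega)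
  refine ⟨F.maxDegree, fun u v => if φ u v = 0 then c u v else φ u v + (F.maxDegree + 1), ?_, ?_, ?_, ?_⟩
  · obtain ⟨v, hv⟩ := F.exists_maximal_degree_vertex
    rw [hv, hFd]
    have h1 := Finset.single_le_sum (f := fun v =>
      2 ^ (Finset.univ.filter (fun u => G.Adj v u ∧ φ v u = 0)).card)
      (fun _ _ => Nat.zero_le _) (Finset.mem_univ v)
    simp only [one_mul, Finset.sum_const, Finset.card_univ, smul_eq_mul, mul_one] at hw h1
    rw [ht] at hw ⊢
    have h2 : (t + 2) * (t + 3) * (t + 1) ≤ 6 * (t + 1) ^ 3 := by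
      have h3 : (t + 2) * (t + 3) ≤ 6 * (t + 1) ^ 2 := by nlinarith
      calc _ ≤ 6 * (t + 1) ^ 2 * (t + 1) := Nat.mul_le_mul h3 le_rfl
        _ = _ := by ring
    omega
  · intro u v; simp only [hs u v, hc.symm u v]
  · intro u v h
    have := hb u v h
    have := hc.le u v
    simp only
    split_ifs <;> omega
  · intro u v x h1 h2
    have e1 := hp u v x h1 h2
    have e2 := hc.proper u v x
    have e3 := hc.le u v
    have e4 := hc.le u x
    have e5 := (hcF u v)
    have e6 := hF u v
    simp only
    split_ifs <;> grind


/-- **Local near-Vizing coloring.** There is an absolute constant `C > 0` such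
that every finite simple graph on `n ≥ 2` vertices has a proper edge coloring
`φ : E → ℕ` in which every edge `(u, v)` receives a color
`φ(u,v) ≤ max(deg u, deg v) + C·log n`. -/
theorem local_near_vizing_coloring :
    ∃ C : ℝ, 0 < C ∧
      ∀ (V : Type) [Fintype V] [DecidableEq V]
        (G : SimpleGraph V) [DecidableRel G.Adj],
        2 ≤ Fintype.card V →
        ∃ φ : G.edgeSet → ℕ,
          (∀ e f : G.edgeSet, e ≠ f →
            (∃ v : V, v ∈ (e : Sym2 V) ∧ v ∈ (f : Sym2 V)) → φ e ≠ φ f) ∧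
          ∀ (u v : V) (h : G.Adj u v),
            (φ ⟨s(u, v), G.mem_edgeSet.mpr h⟩ : ℝ) ≤
              max (G.degree u) (G.degree v) + C * Real.log (Fintype.card V) := by
  classical
  refine ⟨10, by norm_num, ?_⟩
  intro V _ _ G _ hn
  obtain ⟨K, ψ, hK, hs, hb, hp⟩ := nat_version G hn
  refine ⟨fun e => Sym2.lift ⟨ψ, hs⟩ e.1, ?_, ?_⟩
  · rintro ⟨e, he⟩ ⟨f, hf⟩ hne ⟨v, hve, hvf⟩ h
    obtain ⟨x, rfl⟩ := Sym2.mem_iff_exists.1 hve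
    obtain ⟨y, rfl⟩ := Sym2.mem_iff_exists.1 hvf
    simp only [Sym2.lift_mk] at h
    have := hp v x y (G.mem_edgeSet.1 he) (G.mem_edgeSet.1 hf) h
    subst this
    exact hne rfl
  · intro u v h
    simp only [Sym2.lift_mk]
    have h1 := hb u v h
    have h2 : (K : ℝ) * Real.log 2 ≤ 3 * Real.log (Fintype.card V) := by
      have h3 : ((2:ℝ) ^ K) ≤ (Fintype.card V : ℝ) ^ 3 := by exact_mod_cast hK
      have h4 := Real.log_le_log (by positivity) h3
      rw [Real.log_pow, Real.log_pow] at h4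
      exact_mod_cast h4
    have h3 : Real.log 2 ≤ Real.log (Fintype.card V) :=
      Real.log_le_log (by norm_num) (by exact_mod_cast hn)
    have h4 := Real.log_two_gt_d9
    have h5 : (ψ u v : ℝ) ≤ max (G.degree u : ℝ) (G.degree v : ℝ) + ((K : ℝ) + 1) := by
      have : (ψ u v : ℝ) ≤ ((max (G.degree u) (G.degree v) + (K + 1) : ℕ) : ℝ) := by
        have e : ∀ (x : V) (i1 i2 : Fintype (G.neighborSet x)),
          @SimpleGraph.degree V G x i1 = @SimpleGraph.degree V G x i2 := by
          intro x i1 i2; congr!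
        have h1' : ψ u v ≤ max (G.degree u) (G.degree v) + (K + 1) := by
          convert h1
        exact_mod_cast h1'
      push_cast at this
      exact this
    have h6 : (K : ℝ) + 1 ≤ 10 * Real.log (Fintype.card V) := by
      have : (0:ℝ) ≤ K := Nat.cast_nonneg K
      nlinarith
    push_cast
    linarith
end
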